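/- Let S_{v_1} and S_{v_2} be nonempty strata with l(v_1) = l(v_2) + 2k for some integer k ≥ 1. Then S_{v_1} is contained in the closure of S_{v_2} in ℝ^n if and only if v_1 is obtained from v_2 either by one operation of type A followed by k operations of type B, or by k operations of type B alone. -/

import Mathlib

open Polynomial

/-- The monic polynomial `P_a(x) = x^n + a_1 x^{n-1} + … + a_n`. -/
noncomputable def Ppoly (n : ℕ) (a : Fin n → ℝ) : Polynomial ℝ :=
  X ^ n + ∑ i : Fin n, C (a i) * X ^ (n - 1 - (i : ℕ))

/-- The multiplicity vector of `P_a`: the multiplicities of the distinct real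
roots of `P_a`, listed in increasing order of the roots. -/
noncomputable def MV (n : ℕ) (a : Fin n → ℝ) : List ℕ :=
  ((Ppoly n a).roots.toFinset.sort (· ≤ ·)).map fun x => (Ppoly n a).rootMultiplicity x

/-- The stratum of `ℝ^n` associated with a multiplicity vector `v`. -/
def Stratum (n : ℕ) (v : List ℕ) : Set (Fin n → ℝ) := {a | MV n a = v}

/-- `OpA w w'` : the list `w'` is obtained from `w` by an operation of type A,
i.e. by partitioning `w` into consecutive nonempty blocks and replacing each
block by the sum of its entries. -/
def OpA (w w' : List ℕ) : Prop :=
  ∃ B : List (List ℕ), (∀ b ∈ B, b ≠ []) ∧ B.flatten = w ∧ w' = B.map List.sum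

/-- `OpB w w'` : the list `w'` is obtained from `w` by an operation of type B,
i.e. either by inserting a new component equal to `2` at an arbitrary position,
or by increasing one component by `2`. -/
def OpB (w w' : List ℕ) : Prop :=
  (∃ l₁ l₂, w = l₁ ++ l₂ ∧ w' = l₁ ++ 2 :: l₂) ∨
  (∃ l₁ c l₂, w = l₁ ++ c :: l₂ ∧ w' = l₁ ++ (c + 2) :: l₂)

/-- `OpBIter k w w'` : `w'` is obtained from `w` by exactly `k` operations of
type B. -/
def OpBIter : ℕ → List ℕ → List ℕ → Prop
  | 0, w, w' => w' = w
  | k + 1, w, w' => ∃ u, OpB w u ∧ OpBIter k u w'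


lemma Ppoly_rest_deg (n : ℕ) (hn : 1 ≤ n) (a : Fin n → ℝ) :
    (∑ i : Fin n, C (a i) * X ^ (n - 1 - (i : ℕ)) : ℝ[X]).degree < n := by
  refine lt_of_le_of_lt (degree_sum_le _ _) ?_
  rw [Finset.sup_lt_iff (by exact_mod_cast WithBot.bot_lt_coe n)]
  intro i _
  refine lt_of_le_of_lt (degree_C_mul_X_pow_le _ _) ?_
  exact_mod_cast (by omega : n - 1 - (i : ℕ) < n)

lemma Ppoly_monic (n : ℕ) (hn : 1 ≤ n) (a : Fin n → ℝ) : (Ppoly n a).Monic := by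
  have h := Ppoly_rest_deg n hn a
  exact monic_X_pow_add h

lemma Ppoly_natDegree (n : ℕ) (hn : 1 ≤ n) (a : Fin n → ℝ) : (Ppoly n a).natDegree = n := by
  have h := Ppoly_rest_deg n hn a
  have : (Ppoly n a).degree = n := by
    unfold Ppoly
    rw [degree_add_eq_left_of_degree_lt] <;> simp [h]
  exact natDegree_eq_of_degree_eq_some this

lemma Ppoly_coeff (n : ℕ) (a : Fin n → ℝ) (i : Fin n) :
    (Ppoly n a).coeff (n - 1 - (i : ℕ)) = a i := by
  unfold Ppoly
  rw [coeff_add, finsetSum_coeff]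
  have : (X ^ n : ℝ[X]).coeff (n - 1 - (i : ℕ)) = 0 := by
    rw [coeff_X_pow, if_neg]; omega
  rw [this, zero_add, Finset.sum_eq_single i]
  · simp
  · intro j _ hj
    rw [coeff_C_mul_X_pow, if_neg]
    intro h; apply hj; ext; omega
  · simp

lemma exists_Ppoly (n : ℕ) (hn : 1 ≤ n) (p : ℝ[X]) (hp : p.Monic) (hd : p.natDegree = n) :
    p = Ppoly n (fun i => p.coeff (n - 1 - (i : ℕ))) := by
  set a : Fin n → ℝ := (fun i => p.coeff (n - 1 - (i : ℕ))) with ha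
  ext j
  rcases lt_trichotomy j n with h | h | h
  · have := Ppoly_coeff n a ⟨n - 1 - j, by omega⟩
    simp only [ha] at this
    rw [show n - 1 - (n - 1 - j) = j by omega] at this
    exact this.symm
  · have h1 := Ppoly_monic n hn a
    rw [Monic, leadingCoeff, Ppoly_natDegree n hn] at h1
    rw [h, h1, ← hd]; exact hp
  · rw [coeff_eq_zero_of_natDegree_lt (by omega),
      coeff_eq_zero_of_natDegree_lt (by rw [Ppoly_natDegree n hn]; omega)]

/-- product of linear factors -/
noncomputable def zprod (Z : List (ℝ × ℕ)) : ℝ[X] := (Z.map fun z => (X - C z.1) ^ z.2).prod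

lemma zprod_append (Z W : List (ℝ × ℕ)) : zprod (Z ++ W) = zprod Z * zprod W := by
  simp [zprod]

lemma zprod_cons (z : ℝ × ℕ) (W : List (ℝ × ℕ)) :
    zprod (z :: W) = (X - C z.1) ^ z.2 * zprod W := by
  simp [zprod]

lemma zprod_monic (Z : List (ℝ × ℕ)) : (zprod Z).Monic := by
  induction Z with
  | nil => simp [zprod]
  | cons z W ih => rw [zprod_cons]; exact ((monic_X_sub_C _).pow _).mul ih

lemma zprod_root (Z : List (ℝ × ℕ)) (hZ : ∀ z ∈ Z, 0 < z.2) (x : ℝ) :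
    (zprod Z).eval x = 0 ↔ x ∈ Z.map Prod.fst := by
  induction Z with
  | nil => simp [zprod]
  | cons z W ih =>
    have h1 := hZ z (by simp)
    rw [zprod_cons, eval_mul, mul_eq_zero, ih (fun z hz => hZ z (by simp [hz]))]
    simp [h1.ne', sub_eq_zero]

lemma repr_exists (n : ℕ) (hn : 1 ≤ n) (a : Fin n → ℝ) :
    ∃ (Z : List (ℝ × ℕ)) (R : ℝ[X]), Z.Pairwise (fun z w => z.1 < w.1) ∧ (∀ z ∈ Z, 0 < z.2) ∧
      Ppoly n a = zprod Z * R ∧ (∀ x, R.eval x ≠ 0) ∧ Z.map Prod.snd = MV n a := by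
  have hm := Ppoly_monic n hn a
  obtain ⟨R, h1, h2, h3⟩ := exists_prod_multiset_X_sub_C_mul (Ppoly n a)
  have hR : R ≠ 0 := by
    rintro rfl; simp at h1; exact hm.ne_zero h1.symm
  refine ⟨((Ppoly n a).roots.toFinset.sort (· ≤ ·)).map
    (fun x => (x, (Ppoly n a).rootMultiplicity x)), R, ?_, ?_, ?_, ?_, ?_⟩
  · rw [List.pairwise_map]
    exact (Finset.sortedLT_sort _).pairwise
  · intro z hz
    simp only [List.mem_map, Finset.mem_sort, Multiset.mem_toFinset] at hz
    obtain ⟨x, hx, rfl⟩ := hz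
    rw [mem_roots hm.ne_zero] at hx
    exact (rootMultiplicity_pos hm.ne_zero).2 hx
  · conv_lhs => rw [← h1]
    congr 1
    rw [Finset.prod_multiset_map_count, zprod, List.map_map]
    rw [← Finset.prod_map_toList]
    refine List.Perm.prod_eq ?_
    have := (Finset.sort_perm_toList (Ppoly n a).roots.toFinset (· ≤ ·)).symm.map
      (fun x => (X - C x) ^ (Ppoly n a).rootMultiplicity x)
    simpa [Function.comp_def] using this
  · intro x hx
    have : x ∈ R.roots := by rw [mem_roots hR]; exact hx
    rw [h3] at this; simp at this
  · simp [MV, Function.comp_def]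

lemma repr_MV (n : ℕ) (hn : 1 ≤ n) (a : Fin n → ℝ) (Z : List (ℝ × ℕ)) (R : ℝ[X])
    (hs : Z.Pairwise (fun z w => z.1 < w.1)) (hp : ∀ z ∈ Z, 0 < z.2)
    (he : Ppoly n a = zprod Z * R) (hR : ∀ x, R.eval x ≠ 0) : MV n a = Z.map Prod.snd := by
  have hm := Ppoly_monic n hn a
  have hs' : (Z.map Prod.fst).Pairwise (· < ·) := by rwa [List.pairwise_map]
  have hroots : (Ppoly n a).roots.toFinset = (Z.map Prod.fst).toFinset := by
    ext x
    rw [Multiset.mem_toFinset, mem_roots hm.ne_zero, IsRoot, he, eval_mul, mul_eq_zero,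
      zprod_root Z hp, List.mem_toFinset]
    simp [hR x]
  have hsort : (Ppoly n a).roots.toFinset.sort (· ≤ ·) = Z.map Prod.fst := by
    rw [hroots]
    exact (List.toFinset_sort _ (hs'.imp (fun h => ne_of_lt h))).2 (hs'.imp le_of_lt)
  unfold MV
  rw [hsort, List.map_map]
  apply List.map_congr_left
  intro z hz
  obtain ⟨Z1, Z2, rfl⟩ := List.append_of_mem hz
  have hne := hm.ne_zero
  rw [he] at hne
  simp only [Function.comp]
  rw [he]
  rw [zprod_append, zprod_cons] at hne ⊢
  rw [show zprod Z1 * ((X - C z.1) ^ z.2 * zprod Z2) * R =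
    (zprod Z1 * zprod Z2 * R) * (X - C z.1) ^ z.2 by ring] at hne ⊢
  rw [rootMultiplicity_mul_X_sub_C_pow (left_ne_zero_of_mul hne),
    rootMultiplicity_eq_zero, zero_add]
  rw [IsRoot, eval_mul, ← zprod_append, mul_eq_zero, not_or,
    zprod_root _ (fun w hw => hp w (by simp at hw ⊢; tauto))]
  refine ⟨?_, hR _⟩
  rw [List.pairwise_append, List.pairwise_cons] at hs
  obtain ⟨h1, ⟨h2, h3⟩, h4⟩ := hs
  intro hmem
  simp only [List.map_append, List.mem_append, List.mem_map] at hmem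
  rcases hmem with ⟨w, hw, hw'⟩ | ⟨w, hw, hw'⟩
  · exact absurd hw' (h4 w hw z (by simp)).ne
  · exact absurd hw' (h2 w hw).ne'

/-- coefficientwise continuity -/
def CC (f : ℝ → ℝ[X]) : Prop := ∀ i, Continuous fun e => (f e).coeff i

lemma CC.mul {f g : ℝ → ℝ[X]} (hf : CC f) (hg : CC g) : CC (fun e => f e * g e) := by
  intro i
  simp only [coeff_mul]
  exact continuous_finsetSum _ fun x _ => (hf _).mul (hg _)

lemma CC.const (p : ℝ[X]) : CC (fun _ => p) := fun _ => continuous_const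

lemma CC.pow {f : ℝ → ℝ[X]} (hf : CC f) (k : ℕ) : CC (fun e => f e ^ k) := by
  induction k with
  | zero => simpa using CC.const 1
  | succ k ih => simpa [pow_succ] using ih.mul hf

lemma CC.add {f g : ℝ → ℝ[X]} (hf : CC f) (hg : CC g) : CC (fun e => f e + g e) := by
  intro i
  simp only [coeff_add]
  exact (hf _).add (hg _)

lemma CC.C {f : ℝ → ℝ} (hf : Continuous f) : CC (fun e => Polynomial.C (f e)) := by
  intro i
  simp only [coeff_C]
  split_ifs
  · exact hf
  · exact continuous_const

open Filter Topology in
lemma closure_of (n : ℕ) (hn : 1 ≤ n) (a : Fin n → ℝ) (w : List ℕ) (f : ℝ → ℝ[X]) (hf : CC f)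
    (h0 : f 0 = Ppoly n a) (hm : ∀ e, (f e).Monic) (hd : ∀ e, (f e).natDegree = (f 0).natDegree)
    (Z : ℝ → List (ℝ × ℕ)) (R : ℝ → ℝ[X]) (hfe : ∀ e, f e = zprod (Z e) * R e)
    (hs : ∀ᶠ e in 𝓝[>] 0, (Z e).Pairwise (fun z w => z.1 < w.1))
    (hp : ∀ e, ∀ z ∈ Z e, 0 < z.2) (hR : ∀ e > 0, ∀ x, (R e).eval x ≠ 0)
    (hw : ∀ e, (Z e).map Prod.snd = w) : a ∈ closure (Stratum n w) := by
  have hd' : ∀ e, (f e).natDegree = n := fun e => by rw [hd, h0, Ppoly_natDegree n hn]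
  have hcont : Continuous (fun e => (fun i : Fin n => (f e).coeff (n - 1 - (i : ℕ)))) :=
    continuous_pi fun i => hf _
  have hlim : Tendsto (fun e => (fun i : Fin n => (f e).coeff (n - 1 - (i : ℕ)))) (𝓝[>] 0) (𝓝 a) := by
    have h1 := (hcont.tendsto 0).mono_left (nhdsWithin_le_nhds (s := Set.Ioi 0))
    have h2 : (fun i : Fin n => (f 0).coeff (n - 1 - (i : ℕ))) = a := by
      ext i; rw [h0, Ppoly_coeff]
    rwa [h2] at h1
  refine mem_closure_of_tendsto hlim ?_
  filter_upwards [hs, self_mem_nhdsWithin] with e he he0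
  change MV n _ = w
  rw [← hw e]
  refine repr_MV n hn _ (Z e) (R e) he (hp e) ?_ (hR e he0)
  rw [← exists_Ppoly n hn (f e) (hm e) (hd' e), hfe e]

lemma split_mid (Z : List (ℝ × ℕ)) (pre post : List ℕ) (m : ℕ)
    (h : Z.map Prod.snd = pre ++ m :: post) :
    ∃ Z1 r Z2, Z = Z1 ++ (r, m) :: Z2 ∧ Z1.map Prod.snd = pre ∧ Z2.map Prod.snd = post := by
  obtain ⟨Z1, Z', rfl, h1, h2⟩ := List.map_eq_append_iff.1 h
  obtain ⟨z, Z2, rfl, h3, h4⟩ := List.map_eq_cons_iff.1 h2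
  exact ⟨Z1, z.1, Z2, by rw [← h3], h1, h4⟩

lemma R_monic {Z : List (ℝ × ℕ)} {R : ℝ[X]} (h : (zprod Z * R).Monic) : R.Monic :=
  (zprod_monic Z).of_mul_monic_left h

lemma quad_monic (r e : ℝ) : ((X - C r) ^ 2 + C e : ℝ[X]).Monic ∧
    ((X - C r) ^ 2 + C e : ℝ[X]).natDegree = 2 := by
  have h : ((X - C r) ^ 2 : ℝ[X]).degree = 2 := by simp [degree_pow]
  constructor
  · refine ((monic_X_sub_C r).pow 2).add_of_left ?_
    rw [h]
    exact lt_of_le_of_lt degree_C_le (by norm_num)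
  · rw [natDegree_add_C]; simp

open Filter Topology in
lemma closure_B (n : ℕ) (hn : 1 ≤ n) (w u : List ℕ) (hB : OpB w u) (hw : ∀ m ∈ w, 0 < m) :
    Stratum n u ⊆ closure (Stratum n w) := by
  intro a ha
  obtain ⟨Z, R, hs, hp, he, hR, hZ⟩ := repr_exists n hn a
  rw [ha] at hZ
  have hmon := Ppoly_monic n hn a
  have hRm : R.Monic := R_monic (he ▸ hmon)
  have hq : ∀ (r : ℝ), ∀ e > 0, ∀ x, (((X - C r) ^ 2 + C e) * R).eval x ≠ 0 := by
    intro r e he x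
    rw [eval_mul]
    refine mul_ne_zero ?_ (hR x)
    simp; positivity
  have hcc : ∀ (W : List (ℝ × ℕ)) (r : ℝ),
      CC (fun e => zprod W * (((X - C r) ^ 2 + C e) * R)) := fun W r =>
    (CC.const _).mul (((CC.const _).add (CC.C continuous_id)).mul (CC.const _))
  have hmm : ∀ (W : List (ℝ × ℕ)) (r e : ℝ), (zprod W * (((X - C r) ^ 2 + C e) * R)).Monic :=
    fun W r e => (zprod_monic W).mul ((quad_monic r e).1.mul hRm)
  have hdd : ∀ (W : List (ℝ × ℕ)) (r e : ℝ), (zprod W * (((X - C r) ^ 2 + C e) * R)).natDegree =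
      (zprod W * (((X - C r) ^ 2 + C 0) * R)).natDegree := by
    intro W r e
    rw [(zprod_monic W).natDegree_mul ((quad_monic r e).1.mul hRm),
      (zprod_monic W).natDegree_mul ((quad_monic r 0).1.mul hRm),
      (quad_monic r e).1.natDegree_mul hRm, (quad_monic r 0).1.natDegree_mul hRm,
      (quad_monic r e).2, (quad_monic r 0).2]
  rcases hB with ⟨l₁, l₂, rfl, rfl⟩ | ⟨l₁, c, l₂, rfl, rfl⟩
  · obtain ⟨Z1, r, Z2, rfl, h1, h2⟩ := split_mid _ _ _ _ hZ
    refine closure_of n hn a _ _ (hcc (Z1 ++ Z2) r) ?_ (hmm _ r) (hdd _ r) (fun _ => Z1 ++ Z2)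
      _ (fun _ => rfl) (Eventually.of_forall fun _ => ?_) ?_ (hq r) ?_
    · rw [he]; simp only [zprod_append, zprod_cons, C_0]; ring
    · exact hs.sublist (by simp)
    · intro e z hz; apply hp; simp at hz ⊢; tauto
    · simp [h1, h2]
  · obtain ⟨Z1, r, Z2, rfl, h1, h2⟩ := split_mid _ _ _ _ hZ
    refine closure_of n hn a _ _ (hcc (Z1 ++ (r, c) :: Z2) r) ?_ (hmm _ r) (hdd _ r)
      (fun _ => Z1 ++ (r, c) :: Z2)
      _ (fun _ => rfl) (Eventually.of_forall fun _ => ?_) ?_ (hq r) ?_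
    · rw [he]; simp only [zprod_append, zprod_cons, C_0]; ring
    · simpa [List.pairwise_append] using hs
    · intro e z hz
      simp only [List.mem_append, List.mem_cons] at hz
      rcases hz with hz | rfl | hz
      · exact hp z (by simp [hz])
      · exact hw c (by simp)
      · exact hp z (by simp [hz])
    · simp [h1, h2]

open Filter Topology in
lemma closure_merge (n : ℕ) (hn : 1 ≤ n) (pre post : List ℕ) (c d : ℕ) (hc : 0 < c) (hd : 0 < d) :
    Stratum n (pre ++ (c + d) :: post) ⊆ closure (Stratum n (pre ++ c :: d :: post)) := by
  intro a ha
  obtain ⟨Z, R, hs, hp, he, hR, hZ⟩ := repr_exists n hn a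
  rw [ha] at hZ
  have hmon := Ppoly_monic n hn a
  have hRm : R.Monic := R_monic (he ▸ hmon)
  obtain ⟨Z1, r, Z2, rfl, h1, h2⟩ := split_mid _ _ _ _ hZ
  rw [List.pairwise_append, List.pairwise_cons] at hs
  obtain ⟨s1, ⟨s2, s3⟩, s4⟩ := hs
  have hZe : ∀ e : ℝ, zprod (Z1 ++ (r, c) :: (r + e, d) :: Z2) * R =
      (zprod Z1 * (X - C r) ^ c) * (X - C (r + e)) ^ d * (zprod Z2 * R) := by
    intro e; simp only [zprod_append, zprod_cons]; ring
  have hA : (zprod Z1 * (X - C r) ^ c).Monic := (zprod_monic Z1).mul ((monic_X_sub_C r).pow c)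
  have hB : (zprod Z2 * R).Monic := (zprod_monic Z2).mul hRm
  have hX : ∀ e : ℝ, ((X - C (r + e)) ^ d : ℝ[X]).Monic := fun e => (monic_X_sub_C _).pow d
  refine closure_of n hn a _ (fun e => zprod (Z1 ++ (r, c) :: (r + e, d) :: Z2) * R) ?_ ?_ ?_ ?_
    (fun e => Z1 ++ (r, c) :: (r + e, d) :: Z2) (fun _ => R) (fun _ => rfl) ?_ ?_
    (fun _ _ => hR) ?_
  · simp only [hZe]
    refine ((CC.const _).mul (CC.pow ?_ d)).mul (CC.const _)
    have : (fun e : ℝ => (X - C (r + e) : ℝ[X])) = fun e => X + C (-(r + e)) := by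
      ext e; simp [sub_eq_add_neg]
    rw [this]
    exact (CC.const _).add (CC.C (by fun_prop))
  · simp only [he, zprod_append, zprod_cons, add_zero]; ring
  · intro e
    simp only [hZe]
    exact (hA.mul (hX e)).mul hB
  · intro e
    simp only [hZe]
    rw [(hA.mul (hX e)).natDegree_mul hB, (hA.mul (hX 0)).natDegree_mul hB,
      hA.natDegree_mul (hX e), hA.natDegree_mul (hX 0)]
    simp only [natDegree_pow, natDegree_X_sub_C]
  · have hev : ∀ᶠ e in 𝓝[>] (0:ℝ), ∀ z ∈ Z2, r + e < z.1 := by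
      have : ∀ᶠ e in 𝓝[>] (0:ℝ), ∀ z ∈ Z2.toFinset, r + e < z.1 := by
        rw [Filter.eventually_all_finset]
        intro z hz
        have hlt : r + 0 < z.1 := by simpa using s2 z (by simpa using hz)
        have hc : ContinuousAt (fun e : ℝ => r + e) 0 := by fun_prop
        exact nhdsWithin_le_nhds (hc.eventually_lt continuousAt_const hlt)
      simpa using this
    filter_upwards [hev, self_mem_nhdsWithin] with e h3 h4
    have h4 : 0 < e := h4
    rw [List.pairwise_append, List.pairwise_cons, List.pairwise_cons]
    refine ⟨s1, ⟨?_, h3, s3⟩, ?_⟩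
    · intro z hz
      rcases List.mem_cons.1 hz with rfl | hz
      · simpa using h4
      · exact s2 z hz
    · intro z hz w hw
      have h5 := s4 z hz _ (List.mem_cons_self)
      rcases List.mem_cons.1 hw with rfl | hw
      · exact h5
      rcases List.mem_cons.1 hw with rfl | hw
      · simp at h5 ⊢; linarith
      · exact s4 z hz w (by simp [hw])
  · intro e z hz
    simp only [List.mem_append, List.mem_cons] at hz
    rcases hz with hz | rfl | rfl | hz
    · exact hp z (by simp [hz])
    · exact hc
    · exact hd
    · exact hp z (by simp [hz])
  · simp [h1, h2]

lemma closure_block (n : ℕ) (hn : 1 ≤ n) (b : List ℕ) (hb : b ≠ []) (hpos : ∀ m ∈ b, 0 < m)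
    (post : List ℕ) : ∀ pre : List ℕ,
    Stratum n (pre ++ b.sum :: post) ⊆ closure (Stratum n (pre ++ b ++ post)) := by
  induction b with
  | nil => exact absurd rfl hb
  | cons c t ih =>
    intro pre
    cases t with
    | nil => simpa using subset_closure
    | cons d t =>
      have h1 := closure_merge n hn pre post c (d :: t).sum (hpos c (by simp))
        (by have := hpos d (by simp); simp; omega)
      have h2 := ih (by simp) (fun m hm => hpos m (by simp [hm])) (pre ++ [c])
      rw [List.sum_cons]
      refine h1.trans (closure_minimal ?_ isClosed_closure)
      simpa using h2

lemma closure_A (n : ℕ) (hn : 1 ≤ n) (B : List (List ℕ)) (hB : ∀ b ∈ B, b ≠ [])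
    (hpos : ∀ b ∈ B, ∀ m ∈ b, 0 < m) : ∀ pre : List ℕ,
    Stratum n (pre ++ B.map List.sum) ⊆ closure (Stratum n (pre ++ B.flatten)) := by
  induction B with
  | nil => intro pre; simpa using subset_closure
  | cons b B ih =>
    intro pre
    have h1 := ih (fun b hb => hB b (by simp [hb])) (fun b hb => hpos b (by simp [hb]))
      (pre ++ [b.sum])
    have h2 := closure_block n hn b (hB b (by simp)) (hpos b (by simp)) B.flatten pre
    simp only [List.append_assoc, List.singleton_append, List.map_cons, List.flatten_cons] at *
    exact h1.trans (closure_minimal h2 isClosed_closure)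

lemma OpB_pos {w u : List ℕ} (h : OpB w u) (hw : ∀ m ∈ w, 0 < m) : ∀ m ∈ u, 0 < m := by
  rcases h with ⟨l₁, l₂, rfl, rfl⟩ | ⟨l₁, c, l₂, rfl, rfl⟩ <;>
  · intro m hm
    simp only [List.mem_append, List.mem_cons] at hm
    rcases hm with h | rfl | h
    · exact hw m (by simp [h])
    · omega
    · exact hw m (by simp [h])

lemma closure_Bs (n : ℕ) (hn : 1 ≤ n) (k : ℕ) : ∀ (w u : List ℕ) (_ : OpBIter k w u)
    (_ : ∀ m ∈ w, 0 < m), Stratum n u ⊆ closure (Stratum n w) := by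
  induction k with
  | zero => rintro w u rfl _; exact subset_closure
  | succ k ih =>
    rintro w u ⟨t, h1, h2⟩ hw
    exact (ih t u h2 (OpB_pos h1 hw)).trans
      (closure_minimal (closure_B n hn w t h1 hw) isClosed_closure)

lemma OpA_pos {w u : List ℕ} (h : OpA w u) (hw : ∀ m ∈ w, 0 < m) : ∀ m ∈ u, 0 < m := by
  obtain ⟨B, h1, rfl, rfl⟩ := h
  intro m hm
  obtain ⟨b, hb, rfl⟩ := List.mem_map.1 hm
  cases b with
  | nil => exact absurd rfl (h1 _ hb)
  | cons c t =>
    have := hw c (List.mem_flatten.2 ⟨_, hb, by simp⟩)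
    simp; omega

lemma easy_dir (n : ℕ) (hn : 1 ≤ n) (v₁ v₂ : List ℕ) (hv₂ : ∀ m ∈ v₂, 0 < m) (k : ℕ)
    (h : (∃ u, OpA v₂ u ∧ OpBIter k u v₁) ∨ OpBIter k v₂ v₁) :
    Stratum n v₁ ⊆ closure (Stratum n v₂) := by
  rcases h with ⟨u, hA, hB⟩ | hB
  · refine (closure_Bs n hn k u v₁ hB (OpA_pos hA hv₂)).trans (closure_minimal ?_ isClosed_closure)
    obtain ⟨B, h1, rfl, rfl⟩ := hA
    exact closure_A n hn B h1 (fun b hb m hm => hv₂ m (List.mem_flatten.2 ⟨b, hb, hm⟩)) []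
  · exact closure_Bs n hn k v₂ v₁ hB hv₂

section Hard
open Filter Topology

/-- number of roots in an open interval, with multiplicities -/
noncomputable def cnt (p : ℝ[X]) (α β : ℝ) : ℕ :=
  Multiset.card (p.roots.filter (fun x => α < x ∧ x < β))

lemma card_filter_eq (s : Multiset ℝ) (α β : ℝ) :
    Multiset.card (s.filter (fun x => α < x ∧ x < β)) =
      ∑ x ∈ s.toFinset.filter (fun x => α < x ∧ x < β), s.count x := by
  rw [← Multiset.toFinset_sum_count_eq, Multiset.toFinset_filter]
  refine Finset.sum_congr rfl fun x hx => ?_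
  rw [Multiset.count_filter, if_pos (Finset.mem_filter.1 hx).2]

lemma cnt_eq (p : ℝ[X]) (α β : ℝ) : cnt p α β =
    ∑ x ∈ p.roots.toFinset.filter (fun x => α < x ∧ x < β), p.rootMultiplicity x := by
  rw [cnt, card_filter_eq]
  simp only [count_roots]

lemma rolle_aux (p : ℝ[X]) (α β : ℝ) :
    (p.roots.toFinset.filter (fun x => α < x ∧ x < β)).card ≤
    ((p.derivative.roots.toFinset.filter (fun x => α < x ∧ x < β)) \
      (p.roots.toFinset.filter (fun x => α < x ∧ x < β))).card + 1 := by
  rcases eq_or_ne (derivative p) 0 with hp' | hp'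
  · rw [eq_C_of_derivative_eq_zero hp']
    simp
  have hp : p ≠ 0 := ne_of_apply_ne derivative (by rwa [derivative_zero])
  refine Finset.card_le_sdiff_of_interleaved fun x hx y hy hxy hxy' => ?_
  rw [Finset.mem_filter, Multiset.mem_toFinset, mem_roots hp] at hx hy
  obtain ⟨z, hz1, hz2⟩ := exists_deriv_eq_zero hxy p.continuousOn (hx.1.trans hy.1.symm)
  refine ⟨z, ?_, hz1⟩
  rw [Finset.mem_filter, Multiset.mem_toFinset, mem_roots hp', IsRoot, ← p.deriv]
  exact ⟨hz2, hx.2.1.trans hz1.1, hz1.2.trans hy.2.2⟩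

lemma rolle_cnt (p : ℝ[X]) (α β : ℝ) : cnt p α β ≤ cnt (derivative p) α β + 1 := by
  set I : ℝ → Prop := fun x => α < x ∧ x < β with hI
  set A := p.roots.toFinset.filter I with hA
  set D := p.derivative.roots.toFinset.filter I with hD
  have hr : A.card ≤ (D \ A).card + 1 := rolle_aux p α β
  rw [cnt_eq, cnt_eq]
  change ∑ x ∈ A, _ ≤ ∑ x ∈ D, _ + 1
  have h1 : ∑ x ∈ A, p.rootMultiplicity x = ∑ x ∈ A, (p.rootMultiplicity x - 1) + A.card := by
    rw [Finset.card_eq_sum_ones, ← Finset.sum_add_distrib]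
    refine Finset.sum_congr rfl fun x hx => ?_
    have : 0 < p.roots.count x :=
      Multiset.count_pos.2 (Multiset.mem_toFinset.1 (Finset.mem_filter.1 hx).1)
    rw [count_roots] at this
    omega
  have h2 : ∑ x ∈ A, (p.rootMultiplicity x - 1) ≤ ∑ x ∈ A, (derivative p).rootMultiplicity x :=
    Finset.sum_le_sum fun _ _ => rootMultiplicity_sub_one_le_derivative_rootMultiplicity _ _
  have h3 : (D \ A).card ≤ ∑ x ∈ D \ A, (derivative p).rootMultiplicity x := by
    rw [Finset.card_eq_sum_ones]
    refine Finset.sum_le_sum fun x hx => ?_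
    have : 0 < (derivative p).roots.count x := Multiset.count_pos.2
      (Multiset.mem_toFinset.1 (Finset.mem_filter.1 (Finset.mem_sdiff.1 hx).1).1)
    rwa [count_roots] at this
  have h4 : ∑ x ∈ A, (derivative p).rootMultiplicity x +
      ∑ x ∈ D \ A, (derivative p).rootMultiplicity x = ∑ x ∈ D, (derivative p).rootMultiplicity x := by
    rw [← Finset.sum_union Finset.disjoint_sdiff, Finset.union_sdiff_self_eq_union,
      ← Finset.sum_subset Finset.subset_union_right]
    intro x hx hx2
    rcases Finset.mem_union.1 hx with h | h
    · rw [← count_roots, Multiset.count_eq_zero]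
      intro h5
      exact hx2 (Finset.mem_filter.2 ⟨Multiset.mem_toFinset.2 h5, (Finset.mem_filter.1 h).2⟩)
    · exact absurd h hx2
  omega

lemma cnt_le_of_iter (α β : ℝ) (m : ℕ) : ∀ (p : ℝ[X])
    (_ : ∀ x, α < x → x < β → (derivative^[m] p).eval x ≠ 0), cnt p α β ≤ m := by
  induction m with
  | zero =>
    intro p h
    rw [cnt, Nat.le_zero, Multiset.card_eq_zero, Multiset.filter_eq_nil]
    rintro x hx ⟨h1, h2⟩
    exact h x h1 h2 (isRoot_of_mem_roots hx)
  | succ m ih =>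
    intro p h
    have := ih (derivative p) (by simpa [Function.iterate_succ_apply] using h)
    have := rolle_cnt p α β
    omega

lemma parity_aux (s : Multiset ℝ) (α β : ℝ) (hab : α < β) (ha : α ∉ s) (hb : β ∉ s) :
    0 < (s.map (fun r => α - r)).prod * (s.map (fun r => β - r)).prod *
      (-1) ^ Multiset.card (s.filter (fun x => α < x ∧ x < β)) := by
  induction s using Multiset.induction with
  | empty => simp
  | cons r s ih =>
    simp only [Multiset.mem_cons, not_or] at ha hb
    have ih := ih ha.2 hb.2
    by_cases h : α < r ∧ r < β
    · rw [Multiset.filter_cons_of_pos (p := fun x => α < x ∧ x < β) _ h]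
      simp only [Multiset.map_cons, Multiset.prod_cons, Multiset.card_cons, pow_succ]
      have : 0 < (r - α) * (β - r) := mul_pos (by linarith) (by linarith)
      nlinarith [mul_pos this ih]
    · rw [Multiset.filter_cons_of_neg (p := fun x => α < x ∧ x < β) _ h]
      simp only [Multiset.map_cons, Multiset.prod_cons]
      have : 0 < (α - r) * (β - r) := by
        rcases lt_or_gt_of_ne ha.1 with h1 | h1
        · have : β < r := lt_of_le_of_ne (not_lt.1 fun h2 => h ⟨h1, h2⟩) hb.1
          nlinarith
        · exact mul_pos (by linarith) (by linarith)
      nlinarith [mul_pos this ih]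

lemma parity_cnt (p : ℝ[X]) (α β : ℝ) (hab : α < β) (ha : p.eval α ≠ 0) (hb : p.eval β ≠ 0) :
    0 < p.eval α * p.eval β * (-1) ^ cnt p α β := by
  obtain ⟨R, h1, h2, h3⟩ := exists_prod_multiset_X_sub_C_mul p
  have hp0 : p ≠ 0 := by rintro rfl; simp at ha
  have hR0 : R ≠ 0 := by rintro rfl; simp at h1; exact hp0 h1.symm
  have hR : ∀ x, R.eval x ≠ 0 := by
    intro x hx
    have : x ∈ R.roots := (mem_roots hR0).2 hx
    rw [h3] at this; simp at this
  have hev : ∀ x, p.eval x = (p.roots.map (fun r => x - r)).prod * R.eval x := by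
    intro x
    conv_lhs => rw [← h1]
    rw [eval_mul, eval_multiset_prod, Multiset.map_map]
    simp [Function.comp_def]
  have hpos : 0 < R.eval α * R.eval β := by
    by_contra hneg
    have hc : ContinuousOn (fun x => R.eval x) (Set.uIcc α β) := R.continuousOn
    have hlt : R.eval α * R.eval β < 0 :=
      lt_of_le_of_ne (not_lt.1 hneg) (mul_ne_zero (hR _) (hR _))
    have : (0:ℝ) ∈ Set.uIcc (R.eval α) (R.eval β) := by
      rw [Set.mem_uIcc]
      rcases mul_neg_iff.1 hlt with h | h
      · right; exact ⟨h.2.le, h.1.le⟩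
      · left; exact ⟨h.1.le, h.2.le⟩
    obtain ⟨x, _, hx⟩ := intermediate_value_uIcc hc this
    exact hR x hx
  have := parity_aux p.roots α β hab (fun h => ha (isRoot_of_mem_roots h))
    (fun h => hb (isRoot_of_mem_roots h))
  rw [hev α, hev β, cnt]
  nlinarith [mul_pos this hpos]

lemma cont_coeff (n i : ℕ) : Continuous (fun b : Fin n → ℝ => (Ppoly n b).coeff i) := by
  simp only [Ppoly, coeff_add, finsetSum_coeff, coeff_C_mul]
  fun_prop

lemma cont_eval (n : ℕ) (hn : 1 ≤ n) (m : ℕ) :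
    Continuous (fun z : (Fin n → ℝ) × ℝ => (derivative^[m] (Ppoly n z.1)).eval z.2) := by
  have : ∀ z : (Fin n → ℝ) × ℝ, (derivative^[m] (Ppoly n z.1)).eval z.2 =
      ∑ i ∈ Finset.range (n + 1),
        ((i + m).descFactorial m • (Ppoly n z.1).coeff (i + m)) * z.2 ^ i := by
    intro z
    rw [eval_eq_sum_range' (n := n + 1)]
    · simp only [coeff_iterate_derivative]
    · refine lt_of_le_of_lt (natDegree_iterate_derivative _ _) ?_
      rw [Ppoly_natDegree n hn]; omega
  simp only [this]
  refine continuous_finsetSum _ fun i _ => ?_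
  exact (((cont_coeff n (i + m)).comp continuous_fst).const_smul ((i + m).descFactorial m)).mul (continuous_snd.pow i)

lemma cont_eval0 (n : ℕ) (hn : 1 ≤ n) :
    Continuous (fun z : (Fin n → ℝ) × ℝ => (Ppoly n z.1).eval z.2) := cont_eval n hn 0

lemma tube (n : ℕ) (hn : 1 ≤ n) (m : ℕ) (a : Fin n → ℝ) (K : Set ℝ) (hK : IsCompact K)
    (h : ∀ x ∈ K, (derivative^[m] (Ppoly n a)).eval x ≠ 0) :
    ∀ᶠ b in 𝓝 a, ∀ x ∈ K, (derivative^[m] (Ppoly n b)).eval x ≠ 0 := by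
  refine hK.eventually_forall_of_forall_eventually fun x hx => ?_
  have := (cont_eval n hn m).continuousAt (x := (a, x))
  exact this.eventually_ne (h x hx)

lemma local_count (n : ℕ) (hn : 1 ≤ n) (a : Fin n → ℝ) (r : ℝ) (hr : (Ppoly n a).eval r = 0) :
    ∀ᶠ δ in 𝓝[>] (0:ℝ), ∀ᶠ b in 𝓝 a, ∃ j,
      (Ppoly n a).rootMultiplicity r = cnt (Ppoly n b) (r - δ) (r + δ) + 2 * j := by
  set P := Ppoly n a with hP
  have hP0 : P ≠ 0 := (Ppoly_monic n hn a).ne_zero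
  set m := P.rootMultiplicity r with hm
  have hder : (derivative^[m] P).eval r ≠ 0 := by
    rw [hm, eval_iterate_derivative_rootMultiplicity]
    have h1 := eval_divByMonic_pow_rootMultiplicity_ne_zero r hP0
    rw [nsmul_eq_mul]
    exact mul_ne_zero (by exact_mod_cast Nat.factorial_ne_zero _) h1
  obtain ⟨d1, hd1, H1⟩ := Metric.eventually_nhds_iff.1
    ((derivative^[m] P).continuous.continuousAt.eventually_ne hder)
  have hother : ∀ᶠ x in 𝓝 r, ∀ y ∈ P.roots.toFinset, y ≠ r → x ≠ y := by
    rw [Filter.eventually_all_finset]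
    intro y _
    by_cases hy : y = r
    · simp [hy]
    · filter_upwards [eventually_ne_nhds (Ne.symm hy)] with x hx _ using hx
  obtain ⟨d2, hd2, H2⟩ := Metric.eventually_nhds_iff.1 hother
  have hd : ∀ᶠ δ in 𝓝[>] (0:ℝ), δ < min d1 d2 :=
    nhdsWithin_le_nhds (eventually_lt_nhds (lt_min hd1 hd2))
  filter_upwards [hd, self_mem_nhdsWithin] with δ hδ hδ0
  have hδ0 : 0 < δ := hδ0
  have hδ1 : δ < d1 := hδ.trans_le (min_le_left _ _)
  have hδ2 : δ < d2 := hδ.trans_le (min_le_right _ _)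
  have hnr : ∀ x, |x - r| ≤ δ → x ≠ r → P.eval x ≠ 0 := by
    intro x hx hxr h0
    have := H2 (y := x) (by rw [Real.dist_eq]; linarith) x
      (Multiset.mem_toFinset.2 ((mem_roots hP0).2 h0)) hxr
    exact this rfl
  have hPa : P.eval (r - δ) ≠ 0 := hnr _ (by simp [abs_of_pos hδ0]) (by linarith)
  have hPb : P.eval (r + δ) ≠ 0 := hnr _ (by simp [abs_of_pos hδ0]) (by linarith)
  have hcP : cnt P (r - δ) (r + δ) = m := by
    rw [cnt_eq]
    have : P.roots.toFinset.filter (fun x => r - δ < x ∧ x < r + δ) = {r} := by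
      ext x
      rw [Finset.mem_filter, Multiset.mem_toFinset, mem_roots hP0, Finset.mem_singleton]
      constructor
      · rintro ⟨h1, h2, h3⟩
        by_contra hne
        exact hnr x (abs_le.2 ⟨by linarith, by linarith⟩) hne h1
      · rintro rfl
        exact ⟨hr, by linarith, by linarith⟩
    rw [this, Finset.sum_singleton]
  have e1 := tube n hn m a (Set.Icc (r - δ) (r + δ)) isCompact_Icc (fun x hx => by
    refine H1 ?_
    rw [Real.dist_eq]
    exact lt_of_le_of_lt (abs_le.2 ⟨by linarith [hx.1], by linarith [hx.2]⟩) hδ1)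
  have e2 : ∀ x, P.eval x ≠ 0 → ∀ᶠ b in 𝓝 a, 0 < P.eval x * (Ppoly n b).eval x := by
    intro x hx
    have hc : Continuous (fun b : Fin n → ℝ => P.eval x * (Ppoly n b).eval x) :=
      continuous_const.mul ((cont_eval0 n hn).comp (continuous_id.prodMk continuous_const))
    exact hc.continuousAt.eventually (lt_mem_nhds (by
      have := mul_self_pos.2 hx
      exact this))
  filter_upwards [e1, e2 _ hPa, e2 _ hPb] with b h1 h2 h3
  have hle := cnt_le_of_iter (r - δ) (r + δ) m (Ppoly n b)
    (fun x hx1 hx2 => h1 x ⟨hx1.le, hx2.le⟩)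
  have q1 := parity_cnt P (r - δ) (r + δ) (by linarith) hPa hPb
  have q2 := parity_cnt (Ppoly n b) (r - δ) (r + δ) (by linarith)
    (right_ne_zero_of_mul h2.ne') (right_ne_zero_of_mul h3.ne')
  rw [hcP] at q1
  set c := cnt (Ppoly n b) (r - δ) (r + δ) with hc
  have hpos : (0:ℝ) < (-1) ^ (m + c) := by
    have h4 := mul_pos q1 q2
    have h5 := mul_pos h2 h3
    rw [pow_add]
    by_contra h6
    have := mul_nonneg h5.le (neg_nonneg.2 (not_lt.1 h6))
    nlinarith
  have heven : Even (m + c) := by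
    by_contra ho
    rw [Nat.not_even_iff_odd] at ho
    rw [ho.neg_one_pow] at hpos
    linarith
  obtain ⟨t, ht⟩ := heven
  exact ⟨t - c, by omega⟩

lemma root_bound (n : ℕ) (hn : 1 ≤ n) (b : Fin n → ℝ) (x : ℝ) (h : (Ppoly n b).eval x = 0) :
    |x| ≤ 1 + ∑ i, |b i| := by
  by_contra hx
  have hs : 0 ≤ ∑ i, |b i| := Finset.sum_nonneg fun i _ => abs_nonneg _
  have h1 : 1 ≤ |x| := by linarith
  have h2 : |x| ^ n ≤ (∑ i, |b i|) * |x| ^ (n - 1) := by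
    have : x ^ n = - ∑ i : Fin n, b i * x ^ (n - 1 - (i : ℕ)) := by
      simp only [Ppoly, eval_add, eval_pow, eval_X, eval_finsetSum, eval_mul, eval_C] at h
      linarith
    rw [← abs_pow, this, abs_neg, Finset.sum_mul]
    refine (Finset.abs_sum_le_sum_abs _ _).trans (Finset.sum_le_sum fun i _ => ?_)
    rw [abs_mul, abs_pow]
    exact mul_le_mul_of_nonneg_left (pow_le_pow_right₀ h1 (by omega)) (abs_nonneg _)
  have h3 : |x| ^ n = |x| * |x| ^ (n - 1) := by
    rw [← pow_succ']; congr 1; omega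
  rw [h3] at h2
  have := le_of_mul_le_mul_right h2 (by positivity)
  linarith

lemma roots_near (n : ℕ) (hn : 1 ≤ n) (a : Fin n → ℝ) (δ : ℝ) (hδ : 0 < δ) :
    ∀ᶠ b in 𝓝 a, ∀ y, (Ppoly n b).eval y = 0 →
      ∃ x, (Ppoly n a).eval x = 0 ∧ x - δ < y ∧ y < x + δ := by
  set M := 2 + ∑ i, |a i| with hM
  set U : Set ℝ := ⋃ x ∈ {x | (Ppoly n a).eval x = 0}, Set.Ioo (x - δ) (x + δ) with hU
  have hK : IsCompact (Set.Icc (-M) M \ U) :=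
    isCompact_Icc.diff (isOpen_biUnion fun _ _ => isOpen_Ioo)
  have e1 := tube n hn 0 a _ hK (fun x hx h0 => hx.2 (by
    simp only [hU, Set.mem_iUnion]
    exact ⟨x, h0, by linarith, by linarith⟩))
  have e2 : ∀ᶠ b in 𝓝 a, ∑ i, |b i| < 1 + ∑ i, |a i| := by
    have hc : Continuous (fun b : Fin n → ℝ => ∑ i, |b i|) := by fun_prop
    exact hc.continuousAt.eventually (gt_mem_nhds (by linarith))
  filter_upwards [e1, e2] with b h1 h2 y hy
  have hb := root_bound n hn b y hy
  have hyM : y ∈ Set.Icc (-M) M := abs_le.1 (by linarith)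
  by_contra hne
  refine h1 y ⟨hyM, fun hyU => hne ?_⟩ hy
  simp only [hU, Set.mem_iUnion] at hyU
  obtain ⟨x, hx, hxy⟩ := hyU
  exact ⟨x, hx, hxy.1, hxy.2⟩

lemma OpBIter_trans (k l : ℕ) : ∀ (u v w : List ℕ), OpBIter k u v → OpBIter l v w →
    OpBIter (k + l) u w := by
  induction k with
  | zero => rintro u v w rfl h; simpa using h
  | succ k ih =>
    rintro u v w ⟨t, h1, h2⟩ h
    rw [show k + 1 + l = (k + l) + 1 by omega]
    exact ⟨t, h1, ih t v w h2 h⟩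

lemma OpBIter_cons (c k : ℕ) : ∀ (u v : List ℕ), OpBIter k u v → OpBIter k (c :: u) (c :: v) := by
  induction k with
  | zero => rintro u v rfl; rfl
  | succ k ih =>
    rintro u v ⟨t, h1, h2⟩
    refine ⟨c :: t, ?_, ih t v h2⟩
    rcases h1 with ⟨l₁, l₂, rfl, rfl⟩ | ⟨l₁, d, l₂, rfl, rfl⟩
    · exact Or.inl ⟨c :: l₁, l₂, rfl, rfl⟩
    · exact Or.inr ⟨c :: l₁, d, l₂, rfl, rfl⟩

lemma OpBIter_incr (j : ℕ) : ∀ (c : ℕ) (u : List ℕ), OpBIter j (c :: u) ((c + 2 * j) :: u) := by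
  induction j with
  | zero => intro c u; rfl
  | succ j ih =>
    intro c u
    refine ⟨(c + 2) :: u, Or.inr ⟨[], c, u, rfl, rfl⟩, ?_⟩
    have := ih (c + 2) u
    rwa [show c + 2 + 2 * j = c + 2 * (j + 1) by ring] at this

lemma OpBIter_sum (k : ℕ) : ∀ (u v : List ℕ), OpBIter k u v → v.sum = u.sum + 2 * k := by
  induction k with
  | zero => rintro u v rfl; simp
  | succ k ih =>
    rintro u v ⟨t, h1, h2⟩
    rw [ih t v h2]
    rcases h1 with ⟨l₁, l₂, rfl, rfl⟩ | ⟨l₁, d, l₂, rfl, rfl⟩ <;> simp <;> omega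

lemma OpA_sum {u v : List ℕ} (h : OpA u v) : v.sum = u.sum := by
  obtain ⟨B, _, rfl, rfl⟩ := h
  rw [List.sum_flatten]

lemma comb (L : List ℝ) (f : ℝ → ℕ) (g : ℝ → List ℕ)
    (h : ∀ x ∈ L, 0 < f x ∧ ∃ j, f x = (g x).sum + 2 * j) :
    ∃ u k, OpA (L.map g).flatten u ∧ OpBIter k u (L.map f) := by
  induction L with
  | nil => exact ⟨[], 0, ⟨[], by simp, rfl, rfl⟩, rfl⟩
  | cons x L ih =>
    obtain ⟨u, k, ⟨B, hB1, hB2, rfl⟩, hk⟩ := ih (fun y hy => h y (by simp [hy]))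
    obtain ⟨hpos, j, hj⟩ := h x (by simp)
    by_cases hg : g x = []
    · rw [hg] at hj
      obtain ⟨i, rfl⟩ : ∃ i, j = i + 1 := ⟨j - 1, by simp at hj; omega⟩
      refine ⟨B.map List.sum, k + (1 + i), ⟨B, hB1, by simp [hg, hB2], rfl⟩, ?_⟩
      refine OpBIter_trans _ _ _ _ _ hk ?_
      refine OpBIter_trans 1 i _ (2 :: L.map f) _ ⟨_, Or.inl ⟨[], _, rfl, rfl⟩, rfl⟩ ?_
      have := OpBIter_incr i 2 (L.map f)
      rw [List.map_cons, hj]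
      convert this using 2
      simp; ring
    · refine ⟨(g x).sum :: B.map List.sum, k + j, ⟨g x :: B, ?_, by simp [hB2], by simp⟩, ?_⟩
      · intro b hb
        rcases List.mem_cons.1 hb with rfl | hb
        · exact hg
        · exact hB1 b hb
      · refine OpBIter_trans _ _ _ _ _ (OpBIter_cons _ _ _ _ hk) ?_
        rw [List.map_cons, hj]
        exact OpBIter_incr _ _ _

lemma blocks (L M : List ℝ) (δ : ℝ) (hM : M.Pairwise (· < ·))
    (hL : L.Pairwise (fun x y => x + δ ≤ y - δ))
    (hnear : ∀ y ∈ M, ∃ x ∈ L, x - δ < y ∧ y < x + δ) :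
    (L.map (fun x => M.filter (fun y => x - δ < y ∧ y < x + δ))).flatten = M := by
  set F := (L.map (fun x => M.filter (fun y => x - δ < y ∧ y < x + δ))).flatten with hF
  have hFs : F.Pairwise (· < ·) := by
    rw [hF, List.pairwise_flatten]
    constructor
    · intro l hl
      obtain ⟨x, _, rfl⟩ := List.mem_map.1 hl
      exact hM.filter _
    · rw [List.pairwise_map]
      refine hL.imp ?_
      intro x x' hxx y hy y' hy'
      simp at hy hy'
      linarith [hy.2.2, hy'.2.1]
  have hperm : F.Perm M := by
    rw [List.perm_ext_iff_of_nodup (hFs.imp ne_of_lt) (hM.imp ne_of_lt)]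
    intro y
    simp only [hF, List.mem_flatten, List.mem_map]
    constructor
    · rintro ⟨_, ⟨x, _, rfl⟩, hy⟩
      exact (List.mem_filter.1 hy).1
    · intro hy
      obtain ⟨x, hx, hxy⟩ := hnear y hy
      exact ⟨_, ⟨x, hx, rfl⟩, List.mem_filter.2 ⟨hy, by simpa using hxy⟩⟩
  exact List.Perm.eq_of_pairwise (fun a b _ _ h1 h2 => absurd h2 h1.not_gt) hFs hM hperm

lemma hard_dir (n : ℕ) (hn : 1 ≤ n) (v₁ v₂ : List ℕ) (hne₁ : (Stratum n v₁).Nonempty)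
    (k : ℕ) (hlen : v₁.sum = v₂.sum + 2 * k)
    (h : Stratum n v₁ ⊆ closure (Stratum n v₂)) : ∃ u, OpA v₂ u ∧ OpBIter k u v₁ := by
  obtain ⟨a, ha⟩ := hne₁
  have hcl := h ha
  have hP0 := (Ppoly_monic n hn a).ne_zero
  set S := (Ppoly n a).roots.toFinset with hS
  have memS : ∀ x, x ∈ S ↔ (Ppoly n a).eval x = 0 := fun x => by
    rw [hS, Multiset.mem_toFinset, mem_roots hP0, IsRoot]
  have e1 : ∀ᶠ δ in 𝓝[>] (0:ℝ), ∀ r ∈ S, ∀ᶠ b in 𝓝 a, ∃ j,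
      (Ppoly n a).rootMultiplicity r = cnt (Ppoly n b) (r - δ) (r + δ) + 2 * j := by
    rw [Filter.eventually_all_finset]
    exact fun r hr => local_count n hn a r ((memS r).1 hr)
  have e2 : ∀ᶠ δ in 𝓝[>] (0:ℝ), ∀ x ∈ S, ∀ y ∈ S, x < y → x + δ ≤ y - δ := by
    rw [Filter.eventually_all_finset]
    intro x _
    rw [Filter.eventually_all_finset]
    intro y _
    by_cases hxy : x < y
    · have : ∀ᶠ δ in 𝓝[>] (0:ℝ), δ < (y - x) / 2 :=
        nhdsWithin_le_nhds (eventually_lt_nhds (by linarith))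
      filter_upwards [this] with δ hδ _
      linarith
    · exact Eventually.of_forall fun _ h => absurd h hxy
  obtain ⟨δ, h1, h2, h0⟩ := (e1.and (e2.and self_mem_nhdsWithin)).exists
  have h0 : 0 < δ := h0
  rw [← Filter.eventually_all_finset] at h1
  obtain ⟨b, hb, h3, h4⟩ :=
    ((mem_closure_iff_frequently.1 hcl).and_eventually (h1.and (roots_near n hn a δ h0))).exists
  have hQ0 := (Ppoly_monic n hn b).ne_zero
  set T := (Ppoly n b).roots.toFinset with hT
  have memT : ∀ x, x ∈ T ↔ (Ppoly n b).eval x = 0 := fun x => by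
    rw [hT, Multiset.mem_toFinset, mem_roots hQ0, IsRoot]
  have hbl := blocks (S.sort (· ≤ ·)) (T.sort (· ≤ ·)) δ (Finset.sortedLT_sort _).pairwise
    (List.Pairwise.imp_of_mem (fun {x y} hx hy hxy => h2 x ((Finset.mem_sort _).1 hx) y
      ((Finset.mem_sort _).1 hy) hxy) (Finset.sortedLT_sort _).pairwise)
    (fun y hy => by
      obtain ⟨x, hx, hxy⟩ := h4 y ((memT y).1 ((Finset.mem_sort _).1 hy))
      exact ⟨x, (Finset.mem_sort _).2 ((memS x).2 hx), hxy⟩)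
  have hv1 : v₁ = (S.sort (· ≤ ·)).map (fun x => (Ppoly n a).rootMultiplicity x) := ha.symm
  have hv2 : v₂ = (T.sort (· ≤ ·)).map (fun x => (Ppoly n b).rootMultiplicity x) := hb.symm
  obtain ⟨u, k', hA, hB⟩ := comb (S.sort (· ≤ ·)) (fun x => (Ppoly n a).rootMultiplicity x)
    (fun x => ((T.sort (· ≤ ·)).filter (fun y => x - δ < y ∧ y < x + δ)).map
      (fun x => (Ppoly n b).rootMultiplicity x)) (by
    intro x hx
    rw [Finset.mem_sort] at hx
    refine ⟨(rootMultiplicity_pos hP0).2 ((memS x).1 hx), ?_⟩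
    obtain ⟨j, hj⟩ := h3 x hx
    refine ⟨j, ?_⟩
    rw [hj, cnt_eq, ← List.sum_toFinset _ ((Finset.sort_nodup _ _).filter _),
      List.toFinset_filter, Finset.sort_toFinset]
    simp [hT])
  rw [← hv1] at hB
  have hfl : ((S.sort (· ≤ ·)).map
      (fun x => ((T.sort (· ≤ ·)).filter (fun y => x - δ < y ∧ y < x + δ)).map
      (fun x => (Ppoly n b).rootMultiplicity x))).flatten = v₂ := by
    rw [hv2]
    conv_rhs => rw [← hbl, List.map_flatten, List.map_map]
    rfl
  rw [hfl] at hA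
  have s1 := OpA_sum hA
  have s2 := OpBIter_sum _ _ _ hB
  obtain rfl : k' = k := by omega
  exact ⟨u, hA, hB⟩

end Hard

/-- Let `S_{v₁}`, `S_{v₂}` be nonempty strata with `l(v₁) = l(v₂) + 2k`,
`k ≥ 1`. Then `S_{v₁}` is contained in the closure of `S_{v₂}` iff `v₁` is
obtained from `v₂` either by one operation of type A followed by `k` operations
of type B, or by `k` operations of type B alone. -/
theorem adjacency_different_length (n : ℕ) (hn : 1 ≤ n) (v₁ v₂ : List ℕ)
    (hv₁ : ∀ m ∈ v₁, 0 < m) (hv₂ : ∀ m ∈ v₂, 0 < m)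
    (hne₁ : (Stratum n v₁).Nonempty) (hne₂ : (Stratum n v₂).Nonempty)
    (k : ℕ) (hk : 1 ≤ k) (hlen : v₁.sum = v₂.sum + 2 * k) :
    Stratum n v₁ ⊆ closure (Stratum n v₂) ↔
      ((∃ u, OpA v₂ u ∧ OpBIter k u v₁) ∨ OpBIter k v₂ v₁) := by
  exact ⟨fun h => Or.inl (hard_dir n hn v₁ v₂ hne₁ k hlen h), easy_dir n hn v₁ v₂ hv₂ k⟩
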